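/- Let r be an integer with 1 ≤ r ≤ 8, and let D be a minimal Enriques diagram with cod(D) ≥ r+1. Then D contains a minimal Enriques subdiagram D′ such that cod(D′) ≥ r and deg(D′) ≤ 3r. -/

import Mathlib

open Classical Finset

/-- The raw data of a finite weighted forest equipped with a proximity relation.
The vertices are the elements of `Fin n`; `parent v` is the immediate predecessor of `v`
(`none` iff `v` is a root); `wt v` is the weight of `v`; and `prox a b` means
that `a` is proximate to `b`. -/
structure PreDiagram where
  n : ℕ
  parent : Fin n → Option (Fin n)
  wt : Fin n → ℕ
  prox : Fin n → Fin n → Prop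

namespace PreDiagram

variable (D : PreDiagram)

/-- `a` is the immediate predecessor of `b`. -/
def ImPred (a b : Fin D.n) : Prop := D.parent b = some a

/-- `a` is a predecessor of `b` (reflexive-transitive closure of `ImPred`). -/
def Pred (a b : Fin D.n) : Prop := Relation.ReflTransGen D.ImPred a b

/-- `a` is a proper predecessor of `b`. -/
def ProperPred (a b : Fin D.n) : Prop := Relation.TransGen D.ImPred a b

/-- `a` is a remote predecessor of `b`: a proper but not immediate predecessor. -/
def RemotePred (a b : Fin D.n) : Prop := D.ProperPred a b ∧ ¬ D.ImPred a b

def IsRoot (v : Fin D.n) : Prop := D.parent v = none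

/-- A leaf is a vertex with no proper successor. -/
def IsLeaf (v : Fin D.n) : Prop := ∀ w, ¬ D.ImPred v w

/-- `a` is remotely proximate to `b`: proximate to `b`, and `b` is a remote predecessor. -/
def RemoteProx (a b : Fin D.n) : Prop := D.prox a b ∧ D.RemotePred b a

/-- A satellite is a vertex proximate to a remote predecessor. -/
def IsSatellite (v : Fin D.n) : Prop := ∃ t, D.RemoteProx v t

/-- A free vertex is one that is not a satellite. -/
def IsFree (v : Fin D.n) : Prop := ¬ D.IsSatellite v

/-- The laws of a minimal Enriques diagram. -/
structure IsMED : Prop where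
  /-- The graph is a forest: no vertex is a proper predecessor of itself. -/
  forest : ∀ v, ¬ D.ProperPred v v
  /-- Every weight is at least `1`. -/
  wt_pos : ∀ v, 1 ≤ D.wt v
  /-- Law of Proximity: a root is proximate to no vertex. -/
  root_not_prox : ∀ v, D.IsRoot v → ∀ w, ¬ D.prox v w
  /-- Law of Proximity: a non-root is proximate to its immediate predecessor. -/
  prox_parent : ∀ v u, D.parent v = some u → D.prox v u
  /-- Law of Proximity: any other vertex a non-root is proximate to is a remote predecessor. -/
  prox_remote : ∀ v u w, D.parent v = some u → D.prox v w → w ≠ u → D.RemotePred w v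
  /-- Law of Proximity: a non-root is proximate to at most one vertex other than its
  immediate predecessor. -/
  prox_unique : ∀ v u w w', D.parent v = some u → D.prox v w → D.prox v w' →
      w ≠ u → w' ≠ u → w = w'
  /-- Law of Proximity: if `a` is proximate to `b` and `c` lies properly between them,
  then `c` is proximate to `b`. -/
  prox_between : ∀ a b c, D.prox a b → D.ProperPred b c → D.ProperPred c a → D.prox c b
  /-- Proximity Inequality. -/
  prox_ineq : ∀ v, ∑ w ∈ univ.filter (fun w => D.prox w v), D.wt w ≤ D.wt v
  /-- Law of Succession: a vertex `v` has at most `wt v` immediate successors. -/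
  succ_card : ∀ v, (univ.filter (fun w => D.ImPred v w)).card ≤ D.wt v
  /-- Law of Succession: at most two immediate successors are satellites. -/
  succ_sat : ∀ v w₁ w₂ w₃, D.ImPred v w₁ → D.ImPred v w₂ → D.ImPred v w₃ →
      D.IsSatellite w₁ → D.IsSatellite w₂ → D.IsSatellite w₃ →
      w₁ ≠ w₂ → w₁ ≠ w₃ → w₂ ≠ w₃ → False
  /-- Law of Succession: two distinct immediate successors of the same vertex cannot be
  satellites of the same vertex. -/
  succ_sat_diff : ∀ v w₁ w₂ t, D.ImPred v w₁ → D.ImPred v w₂ → w₁ ≠ w₂ →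
      D.RemoteProx w₁ t → D.RemoteProx w₂ t → False
  /-- Law of Minimality: every leaf of weight `1` is a satellite. -/
  minimal : ∀ v, D.IsLeaf v → D.wt v = 1 → D.IsSatellite v

/-- The number of roots. -/
noncomputable def rts : ℕ := (univ.filter (fun v => D.IsRoot v)).card

/-- The number of free vertices. -/
noncomputable def frs : ℕ := (univ.filter (fun v => D.IsFree v)).card

/-- `dim D = rts D + frs D`. -/
noncomputable def dimD : ℕ := D.rts + D.frs

/-- `deg D = Σ_V C(m_V + 1, 2)`. -/
def degD : ℕ := ∑ v, (D.wt v + 1).choose 2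

/-- `cod D = deg D - dim D`. -/
noncomputable def cod : ℤ := (D.degD : ℤ) - (D.dimD : ℤ)

/-- `δ(D) = Σ_V C(m_V, 2)`. -/
def deltaD : ℕ := ∑ v, (D.wt v).choose 2

/-- `r(D) = Σ_V (m_V - Σ_{W ≻ V} m_W)`. -/
noncomputable def rCh : ℤ :=
  ∑ v, ((D.wt v : ℤ) - ∑ w ∈ univ.filter (fun w => D.prox w v), (D.wt w : ℤ))

/-- `μ(D) = 2 δ(D) - r(D) + rts D`. -/
noncomputable def mu : ℤ := 2 * (D.deltaD : ℤ) - D.rCh + (D.rts : ℤ)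

/-- An isomorphism of diagrams: a weight-preserving bijection of the vertices preserving
the immediate-predecessor and proximity relations. -/
structure Iso (D₁ D₂ : PreDiagram) where
  toEquiv : Fin D₁.n ≃ Fin D₂.n
  wt_eq : ∀ v, D₂.wt (toEquiv v) = D₁.wt v
  imPred_iff : ∀ a b, D₂.ImPred (toEquiv a) (toEquiv b) ↔ D₁.ImPred a b
  prox_iff : ∀ a b, D₂.prox (toEquiv a) (toEquiv b) ↔ D₁.prox a b

def Isomorphic (D₁ D₂ : PreDiagram) : Prop := Nonempty (Iso D₁ D₂)

/-- A realization of `D'` as a subdiagram of `D`: an injection of the vertices such that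
the weight of a vertex of `D'` is at most its weight in `D`, and the succession
(predecessor) and proximity relations of `D'` are the ones induced from `D`. -/
structure Subdiagram (D' D : PreDiagram) where
  toFun : Fin D'.n → Fin D.n
  inj : Function.Injective toFun
  wt_le : ∀ v, D'.wt v ≤ D.wt (toFun v)
  pred_iff : ∀ a b, D'.Pred a b ↔ D.Pred (toFun a) (toFun b)
  prox_iff : ∀ a b, D'.prox a b ↔ D.prox (toFun a) (toFun b)

def IsSubdiagram (D' D : PreDiagram) : Prop := Nonempty (Subdiagram D' D)

/-- The parent function of a chain `0 → 1 → ⋯ → n-1`. -/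
def chainParent (n : ℕ) (v : Fin n) : Option (Fin n) :=
  if v.val = 0 then none
  else some ⟨v.val - 1, lt_of_le_of_lt (Nat.sub_le _ _) v.isLt⟩

/-- The diagram `A_k` (`k ≥ 1`): for `k = 2i-1`, a chain of `i` free vertices of weight `2`;
for `k = 2i`, such a chain followed by a chain of two vertices of weight `1`, both
proximate to the `i`-th weight-`2` vertex. -/
def diagA (k : ℕ) : PreDiagram where
  n := if k % 2 = 0 then k / 2 + 2 else (k + 1) / 2
  parent := chainParent _
  wt := fun v => if v.val < (k + 1) / 2 then 2 else 1
  prox := fun a b => a.val = b.val + 1 ∨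
    (k % 2 = 0 ∧ a.val = k / 2 + 1 ∧ b.val + 1 = k / 2)

/-- The diagram `D_k` (`k ≥ 4`): a root of weight `3`, followed by nothing if `k = 4`,
by two vertices of weight `1` both proximate to the root if `k = 5`, and by the diagram
`A_{k-5}` if `k ≥ 6`. -/
def diagD (k : ℕ) : PreDiagram where
  n := (k - 4) / 2 + (if k % 2 = 0 then 1 else 3)
  parent := chainParent _
  wt := fun v => if v.val = 0 then 3 else if v.val ≤ (k - 4) / 2 then 2 else 1
  prox := fun a b => a.val = b.val + 1 ∨
    (k % 2 = 1 ∧ a.val = (k - 4) / 2 + 2 ∧ b.val = (k - 4) / 2)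

/-- The diagram `E_{6l+j}` (`l ≥ 1`, `j ∈ {0,1,2}`), with argument `m = 6l + j`. -/
def diagE (m : ℕ) : PreDiagram where
  n := m / 6 + (if m % 6 = 1 then 2 else 3)
  parent := chainParent _
  wt := fun v => if v.val < m / 6 then 3 else
    if 1 ≤ m % 6 ∧ v.val = m / 6 then 2 else 1
  prox := fun a b => a.val = b.val + 1 ∨
    (m % 6 = 0 ∧ (a.val = m / 6 + 1 ∨ a.val = m / 6 + 2) ∧ b.val + 1 = m / 6) ∨
    (m % 6 = 1 ∧ a.val = m / 6 + 1 ∧ b.val + 1 = m / 6) ∨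
    (m % 6 = 2 ∧ ((a.val = m / 6 + 1 ∧ b.val + 1 = m / 6) ∨
                  (a.val = m / 6 + 2 ∧ b.val = m / 6)))

/-- The diagram `J_{l,k}` (`l ≥ 2`, `k ≥ 0`): a chain of `l - 1` free vertices of weight `3`
followed by the diagram `D_{k+4}`. -/
def diagJ (l k : ℕ) : PreDiagram where
  n := (l - 1) + k / 2 + (if k % 2 = 0 then 1 else 3)
  parent := chainParent _
  wt := fun v => if v.val ≤ l - 1 then 3 else if v.val ≤ l - 1 + k / 2 then 2 else 1
  prox := fun a b => a.val = b.val + 1 ∨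
    (k % 2 = 1 ∧ a.val = (l - 1) + k / 2 + 2 ∧ b.val = (l - 1) + k / 2)

/-- The diagram `X_{1,0}`: a single root of weight `4`. -/
def diagX10 : PreDiagram where
  n := 1
  parent := chainParent _
  wt := fun _ => 4
  prox := fun a b => a.val = b.val + 1

/-- The diagram `X_{1,1}`: a root of weight `4` followed by a chain of two vertices of
weight `1`, both proximate to the root. -/
def diagX11 : PreDiagram where
  n := 3
  parent := chainParent _
  wt := fun v => if v.val = 0 then 4 else 1
  prox := fun a b => a.val = b.val + 1 ∨ (a.val = 2 ∧ b.val = 0)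

/-- The diagram `X_{1,2}`: a root of weight `4` followed by one free vertex of weight `2`. -/
def diagX12 : PreDiagram where
  n := 2
  parent := chainParent _
  wt := fun v => if v.val = 0 then 4 else 2
  prox := fun a b => a.val = b.val + 1

/-- The diagram `Z_{11}`: a root of weight `4` followed by a chain of three vertices of
weight `1`, all proximate to the root. -/
def diagZ11 : PreDiagram where
  n := 4
  parent := chainParent _
  wt := fun v => if v.val = 0 then 4 else 1
  prox := fun a b => a.val = b.val + 1 ∨ ((a.val = 2 ∨ a.val = 3) ∧ b.val = 0)

/-- The diagram `Y_{1,1}`: a root of weight `4` with two immediate free successors of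
weight `1`, each of which has one immediate successor of weight `1` that is remotely
proximate to the root. -/
def diagY11 : PreDiagram where
  n := 5
  parent := fun v =>
    if v.val = 0 then none
    else if v.val ≤ 2 then some ⟨0, by omega⟩
    else if v.val = 3 then some ⟨1, by omega⟩
    else some ⟨2, by omega⟩
  wt := fun v => if v.val = 0 then 4 else 1
  prox := fun a b => (a.val = 1 ∧ b.val = 0) ∨ (a.val = 2 ∧ b.val = 0) ∨
    (a.val = 3 ∧ (b.val = 1 ∨ b.val = 0)) ∨ (a.val = 4 ∧ (b.val = 2 ∨ b.val = 0))

/-- The disjoint union of two diagrams. -/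
def disjUnion (D₁ D₂ : PreDiagram) : PreDiagram where
  n := D₁.n + D₂.n
  parent := fun v =>
    if h : v.val < D₁.n then
      (D₁.parent ⟨v.val, h⟩).map
        (fun w => ⟨w.val, Nat.lt_of_lt_of_le w.isLt (Nat.le_add_right _ _)⟩)
    else
      (D₂.parent ⟨v.val - D₁.n, by have := v.isLt; omega⟩).map
        (fun w => ⟨D₁.n + w.val, by have := w.isLt; omega⟩)
  wt := fun v =>
    if h : v.val < D₁.n then D₁.wt ⟨v.val, h⟩
    else D₂.wt ⟨v.val - D₁.n, by have := v.isLt; omega⟩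
  prox := fun a b =>
    (∃ (ha : a.val < D₁.n) (hb : b.val < D₁.n), D₁.prox ⟨a.val, ha⟩ ⟨b.val, hb⟩) ∨
    (∃ (_ : D₁.n ≤ a.val) (_ : D₁.n ≤ b.val),
      D₂.prox ⟨a.val - D₁.n, by have := a.isLt; omega⟩
              ⟨b.val - D₁.n, by have := b.isLt; omega⟩)

end PreDiagram

namespace PreDiagram

/-- Weight functions on the vertices of `D` (zero = vertex absent) defining a subdiagram. -/
structure Good (D : PreDiagram) (w : Fin D.n → ℕ) : Prop where
  le : ∀ v, w v ≤ D.wt v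
  ineq : ∀ v, ∑ x ∈ univ.filter (fun x => D.prox x v), w x ≤ w v
  mini : ∀ v, w v = 1 → (∀ x, D.ImPred v x → w x = 0) → D.IsSatellite v

/-- codimension contribution of a vertex -/
noncomputable def ctr (D : PreDiagram) (w : Fin D.n → ℕ) (v : Fin D.n) : ℤ :=
  if w v = 0 then 0 else
    (((w v + 1).choose 2 : ℕ) : ℤ) - (if D.IsFree v then 1 else 0) - (if D.IsRoot v then 1 else 0)

variable {D : PreDiagram}

lemma Good.prox_le {w : Fin D.n → ℕ} (g : Good D w) {x v : Fin D.n} (h : D.prox x v) :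
    w x ≤ w v :=
  le_trans (Finset.single_le_sum (f := w) (fun _ _ => Nat.zero_le _)
    (by simp [h])) (g.ineq v)

lemma Good.prox_two {w : Fin D.n → ℕ} (g : Good D w) {x y v : Fin D.n} (h : D.prox x v)
    (h' : D.prox y v) (hne : x ≠ y) : w x + w y ≤ w v := by
  refine le_trans ?_ (g.ineq v)
  rw [← Finset.sum_pair hne]
  apply Finset.sum_le_sum_of_subset
  intro z hz
  simp at hz
  rcases hz with rfl | rfl <;> simp [h, h']

lemma Good.imPred_le (hD : D.IsMED) {w : Fin D.n → ℕ} (g : Good D w) {u v : Fin D.n}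
    (h : D.ImPred u v) : w v ≤ w u := g.prox_le (hD.prox_parent v u h)

lemma Good.pred_le (hD : D.IsMED) {w : Fin D.n → ℕ} (g : Good D w) {u v : Fin D.n}
    (h : D.Pred u v) : w v ≤ w u := by
  induction h with
  | refl => exact le_rfl
  | tail _ h2 ih => exact le_trans (g.imPred_le hD h2) ih

lemma prox_properPred (hD : D.IsMED) {x v : Fin D.n} (h : D.prox x v) : D.ProperPred v x := by
  rcases hp : D.parent x with _ | u
  · exact absurd h (hD.root_not_prox x hp v)
  · by_cases hv : v = u
    · subst hv; exact Relation.TransGen.single hp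
    · exact (hD.prox_remote x u v hp h hv).1

lemma wf_succ (hD : D.IsMED) : WellFounded (fun a b : Fin D.n => D.ProperPred b a) := by
  have : IsTrans (Fin D.n) (fun a b : Fin D.n => D.ProperPred b a) :=
    ⟨fun a b c h1 h2 => Relation.TransGen.trans h2 h1⟩
  have : Std.Irrefl (fun a b : Fin D.n => D.ProperPred b a) := ⟨fun a => hD.forest a⟩
  exact Finite.wellFounded_of_trans_of_irrefl _

/-- if `y` is a satellite with parent `x`, the remote vertex is a predecessor of `x`
to which `x` is proximate -/
lemma sat_parent (hD : D.IsMED) {x y t : Fin D.n} (h : D.ImPred x y) (hs : D.RemoteProx y t) :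
    D.prox x t ∧ D.prox y t ∧ D.prox y x ∧ x ≠ y := by
  obtain ⟨h1, h2, h3⟩ := hs
  have hxy : D.ProperPred x y := Relation.TransGen.single h
  have htx : D.ProperPred t x := by
    obtain ⟨z, hz1, hz2⟩ := Relation.TransGen.tail'_iff.1 h2
    have : z = x := by
      have := h.symm.trans hz2
      simpa using this.symm
    subst this
    rcases Relation.reflTransGen_iff_eq_or_transGen.1 hz1 with h | h
    · subst h; exact absurd hz2 h3
    · exact h
  refine ⟨hD.prox_between y t x h1 htx hxy, h1, hD.prox_parent _ _ h, ?_⟩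
  rintro rfl
  exact hD.forest _ hxy

lemma Good.child (hD : D.IsMED) {w : Fin D.n → ℕ} (g : Good D w) {x : Fin D.n}
    (hx : w x = 1) (hf : D.IsFree x) : ∃ y, D.ImPred x y ∧ w y = 1 := by
  by_contra hc
  push Not at hc
  refine hf (g.mini x hx ?_)
  intro y hy
  have := g.imPred_le hD hy
  have := hc y hy
  omega

lemma Good.no_free (hD : D.IsMED) {w : Fin D.n → ℕ} (g : Good D w) (x : Fin D.n)
    (hx : w x = 1) (hf : D.IsFree x) (hp : ∀ p, D.ImPred p x → w p ≤ 1) : False := by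
  induction x using (wf_succ hD).induction with
  | _ x ih =>
    obtain ⟨y, hy, hwy⟩ := g.child hD hx hf
    by_cases hsy : D.IsSatellite y
    · obtain ⟨t, ht⟩ := hsy
      obtain ⟨h1, h2, -, h4⟩ := sat_parent hD hy ht
      have h5 := g.prox_two h1 h2 h4
      by_cases h6 : D.ImPred t x
      · have := hp t h6
        omega
      · exact hf ⟨t, h1, prox_properPred hD h1, h6⟩
    · refine ih y (Relation.TransGen.single hy) hwy hsy ?_
      intro p hpy
      have : p = x := by
        have := hpy.symm.trans hy
        simpa using this
      subst this; omega

lemma Good.sat_child (hD : D.IsMED) {w : Fin D.n → ℕ} (g : Good D w) (x : Fin D.n)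
    (hx : w x = 1) (hf : D.IsFree x) : ∃ y, D.ImPred x y ∧ w y = 1 ∧ D.IsSatellite y := by
  obtain ⟨y, hy, hwy⟩ := g.child hD hx hf
  refine ⟨y, hy, hwy, ?_⟩
  by_contra hs
  refine g.no_free hD y hwy hs ?_
  intro p hpy
  have : p = x := by
    have := hpy.symm.trans hy
    simpa using this
  subst this; omega

lemma root_free (hD : D.IsMED) {x : Fin D.n} (h : D.IsRoot x) : D.IsFree x := by
  rintro ⟨t, ht, -⟩
  exact hD.root_not_prox x h t ht

lemma two_choose (m : ℕ) : 2 * ((m + 1).choose 2 : ℤ) = m * (m + 1) := by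
  have h := Nat.triangle_succ m
  have h2 := Nat.choose_two_right (m + 1)
  have h3 : 2 * ((m+1).choose 2) = (m + 1) * m := by
    rw [h2]; simp only [Nat.add_sub_cancel]
    exact Nat.mul_div_cancel' (by rw [mul_comm]; exact (Nat.even_mul_succ_self m).two_dvd)
  have : (2 * ((m+1).choose 2) : ℤ) = (m + 1) * m := by exact_mod_cast h3
  rw [this]; ring

/-- The slack inequality, with extra contribution at a vertex of weight at least `2`. -/
lemma Good.slack (hD : D.IsMED) {w : Fin D.n → ℕ} (g : Good D w) (l : Fin D.n) (K : ℤ)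
    (hl : K = 0 ∨ 2 ≤ w l ∧
      K ≤ 3 * D.ctr w l - ((w l + 1).choose 2 : ℕ)) :
    ((∑ v, (w v + 1).choose 2 : ℕ) : ℤ) + K ≤ 3 * ∑ v, D.ctr w v := by
  have hB : (univ.filter (fun v => w v = 1 ∧ D.IsFree v)).card ≤
      (univ.filter (fun v => w v = 1 ∧ D.IsSatellite v)).card := by
    have := fun x (h : w x = 1 ∧ D.IsFree x) => g.sat_child hD x h.1 h.2
    choose! f hf using this
    refine Finset.card_le_card_of_injOn f ?_ ?_
    · intro x hx
      simp only [coe_filter, mem_univ, true_and, Set.mem_ofPred_eq] at hx ⊢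
      exact (hf x hx).2
    · intro x hx y hy hxy
      simp only [coe_filter, mem_univ, true_and, Set.mem_ofPred_eq] at hx hy
      have h1 := (hf x hx).1
      have h2 := (hf y hy).1
      rw [hxy] at h1
      have := h1.symm.trans h2
      simpa using this
  have hB' : ∑ v, (if w v = 1 ∧ D.IsFree v then (1 : ℤ) else 0) ≤
      ∑ v, (if w v = 1 ∧ D.IsSatellite v then (1 : ℤ) else 0) := by
    rw [Finset.sum_boole, Finset.sum_boole]
    exact_mod_cast hB
  have hK : ∑ v, (if v = l then K else 0) = K := by simp
  have key : ∀ v, (((w v + 1).choose 2 : ℕ) : ℤ) + (if v = l then K else 0)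
      + (if w v = 1 ∧ D.IsSatellite v then (1 : ℤ) else 0)
      ≤ 3 * D.ctr w v + (if w v = 1 ∧ D.IsFree v then (1 : ℤ) else 0) := by
    intro v
    by_cases hv : v = l ∧ K ≠ 0
    · obtain ⟨rfl, hK0⟩ := hv
      obtain ⟨h1, h2⟩ := hl.resolve_left hK0
      have h3 : ¬ (w v = 1) := by omega
      simp only [h3, false_and, if_false, if_true]
      linarith
    · have hv' : (if v = l then K else 0) = 0 := by
        split_ifs with h
        · by_contra h0; exact hv ⟨h, h0⟩
        · rfl
      rw [hv']
      have h2 := two_choose (w v)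
      unfold ctr
      rcases Nat.lt_or_ge (w v) 2 with h | h
      · have : w v = 0 ∨ w v = 1 := by omega
        rcases this with h | h
        · simp [h]
        · by_cases hs : D.IsSatellite v
          · have hr : ¬ D.IsRoot v := fun hr => root_free hD hr hs
            simp [h, hs, hr, IsFree]
          · have hr : ¬ D.IsRoot v := fun hr => g.no_free hD v h hs (by
              intro p hp
              rw [IsRoot] at hr; rw [ImPred, hr] at hp
              cases hp)
            simp [h, hs, hr, IsFree]
      · have h0 : w v ≠ 0 := by omega
        have h1 : w v ≠ 1 := by omega
        simp only [h0, h1, if_false, false_and]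
        have : (2 : ℤ) ≤ w v := by exact_mod_cast h
        split_ifs <;> nlinarith
  have := Finset.sum_le_sum (fun v (_ : v ∈ univ) => key v)
  simp only [Finset.sum_add_distrib, ← Finset.mul_sum, hK] at this
  push_cast at this ⊢
  linarith

lemma ctr_update_ne {w : Fin D.n → ℕ} {l v : Fin D.n} (k : ℕ) (h : v ≠ l) :
    D.ctr (Function.update w l k) v = D.ctr w v := by
  simp [ctr, Function.update_of_ne h]

lemma ctr_update_zero (w : Fin D.n → ℕ) (l : Fin D.n) :
    D.ctr (Function.update w l 0) l = 0 := by
  simp [ctr]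

lemma sum_ctr_update (w : Fin D.n → ℕ) (l : Fin D.n) (k : ℕ) :
    ∑ v, D.ctr (Function.update w l k) v
      = ∑ v, D.ctr w v - D.ctr w l + D.ctr (Function.update w l k) l := by
  rw [← Finset.add_sum_erase univ _ (mem_univ l),
    ← Finset.add_sum_erase univ (D.ctr w) (mem_univ l)]
  rw [Finset.sum_congr rfl (fun v hv => ctr_update_ne k (Finset.ne_of_mem_erase hv))]
  ring

lemma sum_update_lt (w : Fin D.n → ℕ) (l : Fin D.n) (k : ℕ) (h : k < w l) :
    ∑ v, Function.update w l k v < ∑ v, w v := by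
  refine Finset.sum_lt_sum ?_ ⟨l, mem_univ _, by simpa using h⟩
  intro v _
  by_cases hv : v = l
  · subst hv; simp; omega
  · simp [hv]

lemma ineq_update (hD : D.IsMED) {w : Fin D.n → ℕ}
    (g : ∀ v, ∑ x ∈ univ.filter (fun x => D.prox x v), w x ≤ w v) {l : Fin D.n} {k : ℕ}
    (hk : k ≤ w l) (hl : ∀ x, D.ProperPred l x → w x = 0) (v : Fin D.n) :
    ∑ x ∈ univ.filter (fun x => D.prox x v), Function.update w l k x ≤ Function.update w l k v := by
  have hle : ∀ x, Function.update w l k x ≤ w x := by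
    intro x
    by_cases hx : x = l
    · subst hx; simpa using hk
    · simp [hx]
  by_cases hv : v = l
  · subst hv
    rw [Finset.sum_eq_zero]
    · exact Nat.zero_le _
    · intro x hx
      simp only [mem_filter, mem_univ, true_and] at hx
      have := hl x (prox_properPred hD hx)
      have := hle x
      omega
  · rw [Function.update_of_ne hv]
    exact le_trans (Finset.sum_le_sum fun x _ => hle x) (g v)

/-- Decreasing the weight of a leaf, general form. -/
lemma Good.update (hD : D.IsMED) {w : Fin D.n → ℕ} (g : Good D w) {l : Fin D.n} {k : ℕ}
    (hk : k ≤ w l) (hl : ∀ x, D.ProperPred l x → w x = 0)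
    (h1 : k = 1 → D.IsSatellite l)
    (h2 : k = 0 → ∀ p, D.ImPred p l → w p = 1 → D.IsSatellite p) :
    Good D (Function.update w l k) := by
  refine ⟨?_, ineq_update hD g.ineq hk hl, ?_⟩
  · intro x
    by_cases hx : x = l
    · subst hx; simpa using le_trans hk (g.le _)
    · simpa [hx] using g.le x
  · intro v hv hc
    by_cases hvl : v = l
    · subst hvl
      exact h1 (by simpa using hv)
    · rw [Function.update_of_ne hvl] at hv
      by_cases hp : D.ImPred v l ∧ k = 0
      · exact h2 hp.2 v hp.1 hv
      · refine g.mini v hv ?_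
        intro x hx
        have := hc x hx
        by_cases hxl : x = l
        · subst hxl
          simp at this
          exact absurd ⟨hx, this⟩ hp
        · simpa [hxl] using this

lemma imPred_unique {p q x : Fin D.n} (h : D.ImPred p x) (h' : D.ImPred q x) : p = q := by
  have := h.symm.trans h'
  simpa using this

lemma main_ind (hD : D.IsMED) (r : ℕ) (hr : 1 ≤ r) (N : ℕ) : ∀ w : Fin D.n → ℕ, Good D w →
    ∑ v, w v ≤ N → (r : ℤ) ≤ ∑ v, D.ctr w v →
    ∃ w', Good D w' ∧ (r : ℤ) ≤ ∑ v, D.ctr w' v ∧ ∑ v, (w' v + 1).choose 2 ≤ 3 * r := by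
  induction N with
  | zero =>
    intro w g hN hc
    have h0 : ∀ v, w v = 0 := by
      intro v
      have := Finset.single_le_sum (f := w) (fun _ _ => Nat.zero_le _) (mem_univ v)
      omega
    have : ∑ v, D.ctr w v = 0 := Finset.sum_eq_zero fun v _ => by simp [ctr, h0]
    omega
  | succ N ih =>
    intro w g hN hc
    -- a vertex with nonzero weight
    obtain ⟨v0, hv0⟩ : ∃ v, w v ≠ 0 := by
      by_contra h0
      push Not at h0
      have : ∑ v, D.ctr w v = 0 := Finset.sum_eq_zero fun v _ => by simp [ctr, h0]
      omega
    obtain ⟨l, hl0, hlmin⟩ := (wf_succ hD).has_min {v | w v ≠ 0} ⟨v0, hv0⟩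
    have hl : ∀ x, D.ProperPred l x → w x = 0 := by
      intro x hx
      by_contra h
      exact hlmin x h hx
    replace hl0 : w l ≠ 0 := hl0
    -- if the slack is sufficient we are done
    have done : ∀ K : ℤ, (K = 0 ∨ 2 ≤ w l ∧ K ≤ 3 * D.ctr w l - ((w l + 1).choose 2 : ℕ)) →
        3 * (∑ v, D.ctr w v) ≤ 3 * r + K →
        ∃ w', Good D w' ∧ (r : ℤ) ≤ ∑ v, D.ctr w' v ∧ ∑ v, (w' v + 1).choose 2 ≤ 3 * r := by
      intro K h1 h2
      refine ⟨w, g, hc, ?_⟩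
      have := g.slack hD l K h1
      zify
      push_cast at this
      linarith
    by_cases hcr : ∑ v, D.ctr w v = r
    · exact done 0 (Or.inl rfl) (by linarith)
    have hcr' : (r : ℤ) + 1 ≤ ∑ v, D.ctr w v := by omega
    -- reducing step at the leaf
    have red : ∀ k, k < w l → (k = 1 → D.IsSatellite l) →
        (k = 0 → ∀ p, D.ImPred p l → w p = 1 → D.IsSatellite p) →
        (r : ℤ) ≤ ∑ v, D.ctr w v - D.ctr w l + D.ctr (Function.update w l k) l →
        ∃ w', Good D w' ∧ (r : ℤ) ≤ ∑ v, D.ctr w' v ∧ ∑ v, (w' v + 1).choose 2 ≤ 3 * r := by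
      intro k hk h1 h2 h3
      refine ih _ (g.update hD hk.le hl h1 h2) ?_ (by rw [sum_ctr_update]; exact h3)
      have := sum_update_lt w l k hk
      omega
    by_cases hw1 : w l = 1
    · have hs : D.IsSatellite l :=
        g.mini l hw1 fun x hx => hl x (Relation.TransGen.single hx)
      have hnr : ¬ D.IsRoot l := fun h => root_free hD h hs
      have hctr : D.ctr w l = 1 := by simp [ctr, hw1, IsFree, hs, hnr]
      obtain ⟨p, hp⟩ : ∃ p, D.ImPred p l := by
        rcases h : D.parent l with _ | p
        · exact absurd h hnr
        · exact ⟨p, h⟩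
      by_cases hpf : w p = 1 ∧ D.IsFree p
      · obtain ⟨hp1, hpf⟩ := hpf
        have hpl : p ≠ l := by
          rintro rfl
          exact hD.forest _ (Relation.TransGen.single hp)
        have hrp : ¬ D.IsRoot p := fun h => g.no_free hD p hp1 hpf (by
          intro q hq
          rw [IsRoot] at h; rw [ImPred, h] at hq
          cases hq)
        have hctrp : D.ctr (Function.update w l 0) p = 0 := by
          rw [ctr_update_ne 0 hpl]
          simp [ctr, hp1, hpf, hrp]
        have hsucc : ∀ x, D.ProperPred p x → Function.update w l 0 x = 0 := by
          intro x hx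
          by_cases hxl : x = l
          · subst hxl; simp
          rw [Function.update_of_ne hxl]
          obtain ⟨c, hc1, hc2⟩ := Relation.TransGen.head'_iff.1 hx
          by_cases hcl : c = l
          · subst hcl
            rcases Relation.reflTransGen_iff_eq_or_transGen.1 hc2 with h | h
            · exact absurd h hxl
            · exact hl x h
          · have h1 := g.prox_two (hD.prox_parent _ _ hc1) (hD.prox_parent _ _ hp) hcl
            have h2 := g.pred_le hD hc2
            omega
        have hgood : Good D (Function.update (Function.update w l 0) p 0) := by
          refine ⟨?_, ?_, ?_⟩
          · intro x
            by_cases hx : x = p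
            · subst hx; simp
            · by_cases hxl : x = l
              · subst hxl; simp [hx]
              · simpa [hx, hxl] using g.le x
          · exact ineq_update hD (ineq_update hD g.ineq (Nat.zero_le _) hl) (Nat.zero_le _) hsucc
          · intro v hv hch
            by_cases hvp : v = p
            · subst hvp; simp at hv
            by_cases hvl : v = l
            · subst hvl; simp [hvp] at hv
            simp only [Function.update_of_ne hvp, Function.update_of_ne hvl] at hv
            by_cases hvpar : D.ImPred v p
            · exact (g.no_free hD p hp1 hpf fun q hq => by
                rw [imPred_unique hq hvpar]; omega).elim
            · refine g.mini v hv fun x hx => ?_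
              have := hch x hx
              have hxp : x ≠ p := by rintro rfl; exact hvpar hx
              have hxl : x ≠ l := by rintro rfl; exact hvp (imPred_unique hx hp)
              simpa only [Function.update_of_ne hxp, Function.update_of_ne hxl] using this
        refine ih _ hgood ?_ ?_
        · have h1 := sum_update_lt w l 0 (by omega)
          have h2 := sum_update_lt (Function.update w l 0) p 0 (by
            rw [Function.update_of_ne hpl]; omega)
          omega
        · rw [sum_ctr_update, sum_ctr_update, hctrp, hctr]
          rw [ctr_update_zero, ctr_update_zero]
          linarith
      · refine red 0 (by omega) (by omega) ?_ ?_
        · intro _ q hq hq1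
          rw [imPred_unique hq hp] at hq1 ⊢
          by_contra h
          exact hpf ⟨hq1, h⟩
        · rw [hctr]
          rw [ctr_update_zero]
          linarith
    · have hw2 : 2 ≤ w l := by omega
      have hbig : ∀ p, D.ImPred p l → w p = 1 → D.IsSatellite p := by
        intro p hp hp1
        have := g.imPred_le hD hp
        omega
      by_cases hA : w l = 2 ∧ D.IsFree l
      · obtain ⟨hA, hf⟩ := hA
        by_cases hR : D.IsRoot l
        · have hctr : D.ctr w l = 1 := by simp [ctr, hA, hf, hR, Nat.choose]
          refine red 0 (by omega) (by omega) (fun _ => hbig) ?_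
          rw [hctr]
          rw [ctr_update_zero]
          linarith
        · have hctr : D.ctr w l = 2 := by simp [ctr, hA, hf, hR, Nat.choose]
          by_cases hc2 : (r : ℤ) + 2 ≤ ∑ v, D.ctr w v
          · refine red 0 (by omega) (by omega) (fun _ => hbig) ?_
            rw [hctr]
            rw [ctr_update_zero]
            linarith
          · refine done 3 (Or.inr ⟨hw2, ?_⟩) (by omega)
            rw [hctr, hA]; simp [Nat.choose]
      · obtain ⟨m, hm⟩ : ∃ m, w l = m + 1 := ⟨w l - 1, by omega⟩
        have hdiff : D.ctr (Function.update w l m) l = D.ctr w l - (m + 1) := by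
          have hm0 : m ≠ 0 := by omega
          have := two_choose m
          have := two_choose (m + 1)
          simp only [ctr, Function.update_self, hm, hm0, if_false, Nat.succ_ne_zero]
          push_cast at *
          linarith
        by_cases hc2 : (r : ℤ) + (m + 1) ≤ ∑ v, D.ctr w v
        · refine red m (by omega) ?_ (fun h => by omega) ?_
          · intro h
            by_contra hs
            exact hA ⟨by omega, hs⟩
          · rw [hdiff]; linarith
        · refine done (3 * m) (Or.inr ⟨hw2, ?_⟩) (by omega)
          have h2 := two_choose (m + 1)
          simp only [ctr, hm, if_false, Nat.succ_ne_zero]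
          push_cast at h2 ⊢
          by_cases hf : D.IsFree l
          · have : (2 : ℤ) ≤ m := by
              have : w l ≠ 2 := fun h => hA ⟨h, hf⟩
              omega
            split_ifs <;> nlinarith
          · have hnr : ¬ D.IsRoot l := fun h => hf (root_free hD h)
            have : (1 : ℤ) ≤ m := by omega
            simp only [hf, hnr, if_false]
            nlinarith

lemma Good.realize (hD : D.IsMED) {w : Fin D.n → ℕ} (g : Good D w) :
    ∃ D' : PreDiagram, D'.IsMED ∧ IsSubdiagram D' D ∧
      D'.cod = ∑ v, D.ctr w v ∧ D'.degD = ∑ v, (w v + 1).choose 2 := by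
  let e : Fin (Fintype.card {v // w v ≠ 0}) ≃ {v // w v ≠ 0} := (Fintype.equivFin _).symm
  let D' : PreDiagram :=
    { n := Fintype.card {v // w v ≠ 0}
      parent := fun a => (D.parent (e a).1).bind
        (fun u => if h : w u ≠ 0 then some (e.symm ⟨u, h⟩) else none)
      wt := fun a => w (e a).1
      prox := fun a b => D.prox (e a).1 (e b).1 }
  let φ : Fin D'.n → Fin D.n := fun a => (e a).1
  have φinj : Function.Injective φ := fun a b h => e.injective (Subtype.ext h)
  have φsurj : ∀ v, w v ≠ 0 → ∃ a, φ a = v := fun v hv => ⟨e.symm ⟨v, hv⟩, by simp [φ]⟩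
  have φne : ∀ a, w (φ a) ≠ 0 := fun a => (e a).2
  have hwt : ∀ a, D'.wt a = w (φ a) := fun a => rfl
  have hprox : ∀ a b, D'.prox a b ↔ D.prox (φ a) (φ b) := fun a b => Iff.rfl
  have him : ∀ a b, D'.ImPred a b ↔ D.ImPred (φ a) (φ b) := by
    intro a b
    show (D.parent (φ b)).bind _ = some a ↔ D.parent (φ b) = some (φ a)
    rcases hp : D.parent (φ b) with _ | u
    · simp
    · have hu : w u ≠ 0 := by
        have h1 := g.imPred_le hD (show D.ImPred u (φ b) from hp)
        have h2 := φne b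
        omega
      simp only [Option.bind_some, dif_pos hu, Option.some.injEq]
      rw [Equiv.symm_apply_eq]
      constructor
      · intro h; exact congrArg Subtype.val h
      · intro h; exact Subtype.ext h
  have hroot : ∀ a, D'.IsRoot a ↔ D.IsRoot (φ a) := by
    intro a
    show (D.parent (φ a)).bind _ = none ↔ D.parent (φ a) = none
    rcases hp : D.parent (φ a) with _ | u
    · simp
    · have hu : w u ≠ 0 := by
        have h1 := g.imPred_le hD (show D.ImPred u (φ a) from hp)
        have h2 := φne a
        omega
      simp [hu]
  have himback : ∀ u b, D.ImPred u (φ b) → ∃ a, φ a = u := by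
    intro u b h
    have h1 := g.imPred_le hD h
    have h2 := φne b
    exact φsurj u (by omega)
  have hpp : ∀ a b, D'.ProperPred a b ↔ D.ProperPred (φ a) (φ b) := by
    intro a b
    constructor
    · intro h
      exact Relation.TransGen.lift φ (fun x y hxy => (him x y).1 hxy) _ _ h
    · intro h
      have key : ∀ x, D.ProperPred x (φ b) → ∀ a, φ a = x → D'.ProperPred a b := by
        intro x hx
        induction hx using Relation.TransGen.head_induction_on with
        | single h1 =>
          rintro a rfl
          exact Relation.TransGen.single ((him _ _).2 h1)
        | @head x' c' h1 h2 ih =>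
          rintro a rfl
          have h3 := g.pred_le hD h2.to_reflTransGen
          have h4 := φne b
          obtain ⟨c, hc⟩ := φsurj c' (by omega)
          subst hc
          exact Relation.TransGen.head ((him _ _).2 h1) (ih c rfl)
      exact key _ h a rfl
  have hpred : ∀ a b, D'.Pred a b ↔ D.Pred (φ a) (φ b) := by
    intro a b
    unfold Pred
    rw [Relation.reflTransGen_iff_eq_or_transGen, Relation.reflTransGen_iff_eq_or_transGen]
    exact or_congr φinj.eq_iff.symm (hpp a b)
  have hrem : ∀ a b, D'.RemotePred a b ↔ D.RemotePred (φ a) (φ b) := fun a b =>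
    and_congr (hpp a b) (not_congr (him a b))
  have hrp : ∀ a b, D'.RemoteProx a b ↔ D.RemoteProx (φ a) (φ b) := fun a b =>
    and_congr (hprox a b) (hrem b a)
  have hsat : ∀ a, D'.IsSatellite a ↔ D.IsSatellite (φ a) := by
    intro a
    constructor
    · rintro ⟨t, ht⟩; exact ⟨φ t, (hrp a t).1 ht⟩
    · rintro ⟨t, ht⟩
      have h3 := g.prox_le ht.1
      have h4 := φne a
      obtain ⟨c, rfl⟩ := φsurj t (by omega)
      exact ⟨c, (hrp a c).2 ht⟩
  have hfree : ∀ a, D'.IsFree a ↔ D.IsFree (φ a) := fun a => not_congr (hsat a)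
  -- transfer of sums
  have hsum : ∀ {M : Type} [AddCommMonoid M] (f : Fin D.n → M), (∀ v, w v = 0 → f v = 0) →
      ∑ a, f (φ a) = ∑ v, f v := by
    intro M _ f hf
    rw [← Finset.sum_image (s := univ) (g := φ) (f := f) (fun x _ y _ h => φinj h)]
    apply Finset.sum_subset (subset_univ _)
    intro v _ hv
    apply hf
    by_contra h
    obtain ⟨a, rfl⟩ := φsurj v h
    exact hv (mem_image_of_mem _ (mem_univ _))
  have hineq : ∀ v, ∑ x ∈ univ.filter (fun x => D'.prox x v), D'.wt x ≤ D'.wt v := by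
    intro v
    refine le_trans (le_of_eq ?_) (g.ineq (φ v))
    rw [Finset.sum_filter, Finset.sum_filter]
    rw [← hsum (fun x => if D.prox x (φ v) then w x else 0) (by intro x hx; simp [hx])]
  have hpos : ∀ v, 1 ≤ D'.wt v := fun v => Nat.one_le_iff_ne_zero.2 (φne v)
  have hpar : ∀ v u, D'.parent v = some u → D'.prox v u := fun v u h =>
    hD.prox_parent _ _ ((him u v).1 h)
  refine ⟨D', ?_, ⟨⟨φ, φinj, fun v => g.le _, hpred, hprox⟩⟩, ?_, ?_⟩
  · refine ⟨?_, hpos, ?_, hpar, ?_, ?_, ?_, hineq, ?_, ?_, ?_, ?_⟩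
    · intro v h; exact hD.forest _ ((hpp v v).1 h)
    · intro v h u; exact hD.root_not_prox _ ((hroot v).1 h) _
    · intro v u x h1 h2 h3
      exact (hrem _ _).2 (hD.prox_remote _ _ _ ((him u v).1 h1) h2 (φinj.ne h3))
    · intro v u x y h1 h2 h3 h4 h5
      exact φinj (hD.prox_unique _ _ _ _ ((him u v).1 h1) h2 h3 (φinj.ne h4) (φinj.ne h5))
    · intro a b c h1 h2 h3
      exact hD.prox_between _ _ _ h1 ((hpp _ _).1 h2) ((hpp _ _).1 h3)
    · intro v
      refine le_trans ?_ (hineq v)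
      rw [Finset.card_eq_sum_ones]
      refine le_trans (Finset.sum_le_sum (fun x _ => hpos x)) ?_
      apply Finset.sum_le_sum_of_subset
      intro x hx
      simp only [mem_filter, mem_univ, true_and] at hx ⊢
      exact hpar x v hx
    · intro v a b c h1 h2 h3 h4 h5 h6 h7 h8 h9
      exact hD.succ_sat (φ v) (φ a) (φ b) (φ c) ((him _ _).1 h1) ((him _ _).1 h2)
        ((him _ _).1 h3) ((hsat _).1 h4) ((hsat _).1 h5) ((hsat _).1 h6)
        (φinj.ne h7) (φinj.ne h8) (φinj.ne h9)
    · intro v a b t h1 h2 h3 h4 h5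
      exact hD.succ_sat_diff (φ v) (φ a) (φ b) (φ t) ((him _ _).1 h1) ((him _ _).1 h2)
        (φinj.ne h3) ((hrp _ _).1 h4) ((hrp _ _).1 h5)
    · intro v h1 h2
      refine (hsat v).2 (g.mini _ h2 ?_)
      intro x hx
      by_contra h
      obtain ⟨c, rfl⟩ := φsurj x h
      exact h1 c ((him _ _).2 hx)
  · rw [← hsum (D.ctr w) (by intro v hv; simp [ctr, hv])]
    unfold cod degD dimD rts frs
    push_cast
    rw [Finset.card_filter, Finset.card_filter]
    push_cast
    rw [← Finset.sum_add_distrib, ← Finset.sum_sub_distrib]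
    apply Finset.sum_congr rfl
    intro a _
    rw [ctr, if_neg (φne a)]
    simp only [hfree, hroot, hwt]
    ring
  · exact hsum (fun v => (w v + 1).choose 2) (by intro v hv; simp [hv])

end PreDiagram

open PreDiagram in
/-- Lemma (4.4): for `1 ≤ r ≤ 8`, a minimal Enriques diagram with `cod(D) ≥ r + 1`
contains a minimal Enriques subdiagram `D'` with `cod(D') ≥ r` and `deg(D') ≤ 3r`. -/
theorem statement14 (r : ℕ) (hr1 : 1 ≤ r) (hr8 : r ≤ 8)
    (D : PreDiagram) (hD : D.IsMED) (hcod : (r : ℤ) + 1 ≤ D.cod) :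
    ∃ D' : PreDiagram, D'.IsMED ∧ IsSubdiagram D' D ∧
      (r : ℤ) ≤ D'.cod ∧ D'.degD ≤ 3 * r := by
  have g : Good D D.wt := ⟨fun _ => le_rfl, hD.prox_ineq, fun v h1 h2 => hD.minimal v
    (fun x hx => by have := h2 x hx; have := hD.wt_pos x; omega) h1⟩
  have hc : (r : ℤ) ≤ ∑ v, D.ctr D.wt v := by
    have : ∑ v, D.ctr D.wt v = D.cod := by
      unfold cod degD dimD rts frs
      push_cast
      rw [Finset.card_filter, Finset.card_filter]
      push_cast
      rw [← Finset.sum_add_distrib, ← Finset.sum_sub_distrib]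
      apply Finset.sum_congr rfl
      intro a _
      have := hD.wt_pos a
      rw [ctr, if_neg (by omega)]
      ring
    omega
  obtain ⟨w, gw, h1, h2⟩ := main_ind hD r hr1 _ D.wt g le_rfl hc
  obtain ⟨D', hM, hS, h3, h4⟩ := gw.realize hD
  exact ⟨D', hM, hS, by rw [h3]; exact h1, by rw [h4]; exact h2⟩
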